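/- The kneading group K is self-replicating: for every word v ∈ ℤ* and every g ∈ K there exists h ∈ K whose section at v satisfies h|_v = g. -/

import Mathlib

/-- States of the kneading automaton: `a i` is the paper's `a_{i+1}` (for `i < k`),
`b i` is the paper's `b_{i+1}` (for `i < p`), and `id` is the identity state. -/
inductive KState : Type
  | a (i : ℕ)
  | b (i : ℕ)
  | id
  deriving DecidableEq

/-- Transition function of the kneading automaton `𝒦(x₁…x_k, y₁…y_p)`, where the paper's
`x_i` is `x (i-1)` and `y_i` is `y (i-1)`.  `KTrans k p x y s z = (output letter, restriction)`. -/
def KTrans (k p : ℕ) (x y : ℕ → ℤ) : KState → ℤ → ℤ × KState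
  | .a 0, z => (z + 1, .id)
  | .a (i+1), z => if z = x i then (z, .a i) else (z, .id)
  | .b 0, z =>
      if z = x (k-1) then (z, .a (k-1))
      else if z = y (p-1) then (z, .b (p-1))
      else (z, .id)
  | .b (i+1), z => if z = y i then (z, .b i) else (z, .id)
  | .id, z => (z, .id)

/-- The action of a state on the tree `ℤ*` of finite words over `ℤ`,
defined recursively by `q(zv) = q(z)·(q|_z)(v)`. -/
def stateAct (k p : ℕ) (x y : ℕ → ℤ) : KState → List ℤ → List ℤ
  | _, [] => []
  | s, z :: v => (KTrans k p x y s z).1 :: stateAct k p x y (KTrans k p x y s z).2 v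

/-- The generating states `S = {a₁,…,a_k, b₁,…,b_p}`. -/
def IsGen (k p : ℕ) (s : KState) : Prop :=
  (∃ i, i < k ∧ s = .a i) ∨ (∃ j, j < p ∧ s = .b j)

/-- The generators of the kneading group, as permutations of `List ℤ` whose underlying
function is the action of a generating state. -/
def SGens (k p : ℕ) (x y : ℕ → ℤ) : Set (Equiv.Perm (List ℤ)) :=
  {g | ∃ s : KState, IsGen k p s ∧ ⇑g = stateAct k p x y s}

/-- The kneading group `K = 𝕂(x₁…x_k, y₁…y_p)`. -/
def Kgroup (k p : ℕ) (x y : ℕ → ℤ) : Subgroup (Equiv.Perm (List ℤ)) :=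
  Subgroup.closure (SGens k p x y)

/-!
Sections at `v` of elements fixing `v` form a subgroup, and taking them can be iterated along a
word, so it suffices to realize every generator as a section at every one-letter word. Every
generating state is the restriction of a generating state `t` at some letter `z₀` that `t` fixes;
the last states `a_k` and `b_p` are both reached from `b₁`, and `x_k ≠ y_p` keeps the two letters
apart. Powers of `a₁` translate the first letter and have trivial sections there, so conjugating
by them moves `z₀` to any letter.
-/

open Equiv (Perm)

section StabilizerSections

variable {α : Type*} {G H : Subgroup (Perm (List α))} {u v : List α}

/-- The sections at `v` of those elements of `G` that fix `v` and preserve the subtree below it: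
the image of the stabilizer of `v` under `h ↦ h|_v`. The condition `h (v ++ w) = v ++ g w` expresses
both `h v = v` and `h|_v = g` when `g` fixes the root `[]`. -/
def stabilizerSections (G : Subgroup (Perm (List α))) (v : List α) :
    Subgroup (Perm (List α)) where
  carrier := {g | ∃ h ∈ G, ∀ w, h (v ++ w) = v ++ g w}
  one_mem' := ⟨1, one_mem G, fun _ => rfl⟩
  mul_mem' := by
    rintro g₁ g₂ ⟨h₁, h₁_mem, h₁_apply⟩ ⟨h₂, h₂_mem, h₂_apply⟩
    exact ⟨h₁ * h₂, mul_mem h₁_mem h₂_mem, fun w => by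
      simp only [Perm.mul_apply, h₂_apply, h₁_apply]⟩
  inv_mem' := by
    rintro g ⟨h, h_mem, h_apply⟩
    exact ⟨h⁻¹, inv_mem h_mem, fun w => by
      rw [Perm.inv_eq_iff_eq, h_apply, ← Perm.mul_apply, mul_inv_cancel, Perm.one_apply]⟩

theorem stabilizerSections_mono (hGH : G ≤ H) :
    stabilizerSections G v ≤ stabilizerSections H v :=
  fun _ ⟨h, h_mem, h_apply⟩ => ⟨h, hGH h_mem, h_apply⟩

theorem le_stabilizerSections_nil : G ≤ stabilizerSections G [] :=
  fun g g_mem => ⟨g, g_mem, fun _ => rfl⟩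

theorem stabilizerSections_stabilizerSections_le :
    stabilizerSections (stabilizerSections G u) v ≤ stabilizerSections G (u ++ v) := by
  rintro g ⟨h, ⟨f, f_mem, f_apply⟩, h_apply⟩
  exact ⟨f, f_mem, fun w => by rw [List.append_assoc, f_apply, h_apply, List.append_assoc]⟩

theorem stabilizerSections_le_of_apply_append {c : Perm (List α)} (c_mem : c ∈ G)
    (c_apply : ∀ w, c (u ++ w) = v ++ w) :
    stabilizerSections G u ≤ stabilizerSections G v := by
  rintro g ⟨h, h_mem, h_apply⟩
  refine ⟨c * h * c⁻¹, mul_mem (mul_mem c_mem h_mem) (inv_mem c_mem), fun w => ?_⟩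
  have c_inv_apply : c⁻¹ (v ++ w) = u ++ w := by rw [Perm.inv_eq_iff_eq, c_apply]
  rw [Perm.mul_apply, Perm.mul_apply, c_inv_apply, h_apply, c_apply]

theorem le_stabilizerSections_of_forall_singleton (hG : ∀ z, G ≤ stabilizerSections G [z])
    (v : List α) : G ≤ stabilizerSections G v := by
  induction v with
  | nil => exact le_stabilizerSections_nil
  | cons z v ih =>
    calc G ≤ stabilizerSections G v := ih
      _ ≤ stabilizerSections (stabilizerSections G [z]) v := stabilizerSections_mono (hG z)
      _ ≤ stabilizerSections G (z :: v) := stabilizerSections_stabilizerSections_le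

theorem apply_nil_of_mem_closure {S : Set (Perm (List α))} (hS : ∀ g ∈ S, g [] = [])
    {g : Perm (List α)} (hg : g ∈ Subgroup.closure S) : g [] = [] := by
  have closure_le : Subgroup.closure S ≤ MulAction.stabilizer (Perm (List α)) ([] : List α) :=
    (Subgroup.closure_le _).2 hS
  exact closure_le hg

end StabilizerSections

section KneadingAutomaton

variable (k p : ℕ) (x y : ℕ → ℤ)

theorem KTrans_fst (s : KState) (z : ℤ) :
    (KTrans k p x y s z).1 = if s = .a 0 then z + 1 else z := by
  rcases s with (_ | i) | (_ | i) | _ <;> simp only [KTrans] <;> split_ifs <;> simp_all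

theorem KTrans_fst_bijective (s : KState) :
    Function.Bijective fun z => (KTrans k p x y s z).1 := by
  simp only [KTrans_fst]
  split_ifs
  · exact (Equiv.addRight (1 : ℤ)).bijective
  · exact Function.bijective_id

theorem stateAct_injective (s : KState) : Function.Injective (stateAct k p x y s) := by
  intro u
  induction u generalizing s with
  | nil => rintro (_ | ⟨z', v⟩) h <;> simp_all [stateAct]
  | cons z u ih =>
    rintro (_ | ⟨z', v⟩) h
    · simp [stateAct] at h
    · obtain ⟨letters_eq, tails_eq⟩ := List.cons.inj h
      obtain rfl := (KTrans_fst_bijective k p x y s).injective letters_eq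
      rw [ih _ tails_eq]

theorem stateAct_surjective (s : KState) : Function.Surjective (stateAct k p x y s) := by
  intro u
  induction u generalizing s with
  | nil => exact ⟨[], rfl⟩
  | cons z u ih =>
    obtain ⟨z', rfl⟩ := (KTrans_fst_bijective k p x y s).surjective z
    obtain ⟨v, rfl⟩ := ih (KTrans k p x y s z').2
    exact ⟨z' :: v, rfl⟩

/-- The automorphism of the tree `ℤ*` induced by a state, as a permutation of the set of words. -/
noncomputable def statePerm (s : KState) : Perm (List ℤ) :=
  .ofBijective (stateAct k p x y s) ⟨stateAct_injective k p x y s, stateAct_surjective k p x y s⟩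

theorem coe_statePerm (s : KState) : ⇑(statePerm k p x y s) = stateAct k p x y s :=
  rfl

theorem statePerm_cons (s : KState) (z : ℤ) (w : List ℤ) :
    statePerm k p x y s (z :: w) =
      (KTrans k p x y s z).1 :: statePerm k p x y (KTrans k p x y s z).2 w :=
  rfl

theorem statePerm_id : statePerm k p x y .id = 1 := by
  ext1 w
  induction w with
  | nil => rfl
  | cons z w ih => rw [statePerm_cons, KTrans, ih, Perm.one_apply, Perm.one_apply]

theorem statePerm_a_zero_zpow_cons (n z : ℤ) (w : List ℤ) :
    (statePerm k p x y (.a 0) ^ n) (z :: w) = (z + n) :: w := by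
  have apply_cons (z : ℤ) : statePerm k p x y (.a 0) (z :: w) = (z + 1) :: w := by
    rw [statePerm_cons, KTrans, statePerm_id, Perm.one_apply]
  induction n generalizing z with
  | zero => simp
  | succ n ih => rw [zpow_add_one, Perm.mul_apply, apply_cons, ih, add_right_comm, add_assoc]
  | pred n ih =>
    have inv_apply_cons : (statePerm k p x y (.a 0))⁻¹ (z :: w) = (z - 1) :: w := by
      rw [Perm.inv_eq_iff_eq, apply_cons, sub_add_cancel]
    rw [zpow_sub_one, Perm.mul_apply, inv_apply_cons, ih, sub_add_eq_add_sub, add_sub_assoc]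

variable {k p}

theorem SGens_eq_image : SGens k p x y = statePerm k p x y '' {s | IsGen k p s} := by
  ext g
  simp only [SGens, Set.mem_ofPred_eq, Set.mem_image, ← coe_statePerm, DFunLike.coe_fn_eq, eq_comm]

theorem statePerm_mem_Kgroup {s : KState} (hs : IsGen k p s) :
    statePerm k p x y s ∈ Kgroup k p x y :=
  Subgroup.subset_closure ⟨s, hs, rfl⟩

theorem apply_nil_of_mem_Kgroup {g : Perm (List ℤ)} (hg : g ∈ Kgroup k p x y) : g [] = [] := by
  refine apply_nil_of_mem_closure ?_ hg
  rintro g ⟨s, -, g_eq⟩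
  rw [g_eq, stateAct]

theorem exists_mem_Kgroup_translate (hk : 1 ≤ k) (z z' : ℤ) :
    ∃ c ∈ Kgroup k p x y, ∀ w, c (z :: w) = z' :: w := by
  have a_mem : statePerm k p x y (.a 0) ∈ Kgroup k p x y :=
    statePerm_mem_Kgroup x y (.inl ⟨0, hk, rfl⟩)
  exact ⟨_, zpow_mem a_mem (z' - z), fun w => by
    rw [statePerm_a_zero_zpow_cons, add_sub_cancel]⟩

variable {x y}

theorem exists_isGen_KTrans_eq (hp : 1 ≤ p) (hxy : x (k - 1) ≠ y (p - 1)) {s : KState}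
    (hs : IsGen k p s) : ∃ t z, IsGen k p t ∧ KTrans k p x y t z = (z, s) := by
  have b_zero : IsGen k p (.b 0) := .inr ⟨0, hp, rfl⟩
  rcases hs with ⟨i, hi, rfl⟩ | ⟨j, hj, rfl⟩
  · rcases (Nat.succ_le_of_lt hi).lt_or_eq with i_lt | rfl
    · exact ⟨.a (i + 1), x i, .inl ⟨i + 1, i_lt, rfl⟩, if_pos rfl⟩
    · exact ⟨.b 0, x i, b_zero, if_pos rfl⟩
  · rcases (Nat.succ_le_of_lt hj).lt_or_eq with j_lt | rfl
    · exact ⟨.b (j + 1), y j, .inr ⟨j + 1, j_lt, rfl⟩, if_pos rfl⟩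
    · exact ⟨.b 0, y j, b_zero, (if_neg hxy.symm).trans (if_pos rfl)⟩

theorem Kgroup_le_stabilizerSections_singleton (hk : 1 ≤ k) (hp : 1 ≤ p)
    (hxy : x (k - 1) ≠ y (p - 1)) (z : ℤ) :
    Kgroup k p x y ≤ stabilizerSections (Kgroup k p x y) [z] := by
  rw [Kgroup, Subgroup.closure_le, ← Kgroup, SGens_eq_image]
  rintro _ ⟨s, hs, rfl⟩
  obtain ⟨t, z₀, ht, trans_eq⟩ := exists_isGen_KTrans_eq hp hxy hs
  obtain ⟨c, c_mem, c_apply⟩ := exists_mem_Kgroup_translate x y hk z₀ z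
  have mem_sections_z₀ : statePerm k p x y s ∈ stabilizerSections (Kgroup k p x y) [z₀] :=
    ⟨statePerm k p x y t, statePerm_mem_Kgroup x y ht, fun w => by
      rw [List.singleton_append, statePerm_cons, trans_eq, List.singleton_append]⟩
  exact stabilizerSections_le_of_apply_append c_mem c_apply mem_sections_z₀

end KneadingAutomaton

theorem stmt8 (k p : ℕ) (hk : 1 ≤ k) (hp : 1 ≤ p) (x y : ℕ → ℤ)
    (hxy : x (k - 1) ≠ y (p - 1)) :
    ∀ v : List ℤ, ∀ g ∈ Kgroup k p x y, ∃ h ∈ Kgroup k p x y,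
      ∀ w : List ℤ, h (v ++ w) = h v ++ g w := by
  intro v g hg
  have singleton_le := Kgroup_le_stabilizerSections_singleton hk hp hxy
  obtain ⟨h, h_mem, h_apply⟩ := le_stabilizerSections_of_forall_singleton singleton_le v hg
  have h_fixes_v : h v = v := by
    simpa only [List.append_nil, apply_nil_of_mem_Kgroup x y hg] using h_apply []
  exact ⟨h, h_mem, fun w => by rw [h_apply, h_fixes_v]⟩
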